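/- Two matrices M, N ∈ ℝ^{2×2} are LCP equivalent if M₁₂·N₁₂ > 0, M₂₁·N₂₁ > 0, and det(M_{αα})·det(N_{αα}) > 0 for every α ⊆ {1,2} (where the determinant of the empty principal submatrix is 1, the 1×1 principal minors are the diagonal entries, and det(M_{{1,2}{1,2}}) = det M). -/

import Mathlib

open Matrix

/-- Complementary matrix `C_M(α)`: j-th column is `-M_{·j}` if `j ∈ α`, else `e_j`. -/
def compMat {n : ℕ} (M : Matrix (Fin n) (Fin n) ℝ) (α : Finset (Fin n)) :
    Matrix (Fin n) (Fin n) ℝ :=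
  fun i j => if j ∈ α then -M i j else (if i = j then 1 else 0)

/-- The orthant `pos C_I(α)`: `x_j ≤ 0` for `j ∈ α`, `x_j ≥ 0` otherwise. -/
def orthant {n : ℕ} (α : Finset (Fin n)) : Set (Fin n → ℝ) :=
  {x | ∀ j, if j ∈ α then x j ≤ 0 else 0 ≤ x j}

/-- The cone generated by the columns of `A`. -/
def posCone {n : ℕ} (A : Matrix (Fin n) (Fin n) ℝ) : Set (Fin n → ℝ) :=
  {q | ∃ p : Fin n → ℝ, (∀ j, 0 ≤ p j) ∧ q = A.mulVec p}

/-- The piecewise linear map `f_M`, in closed form: on the orthant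
`pos C_I(α)` this map equals `x ↦ C_{-M}(α) x`. -/
def fpl {n : ℕ} (M : Matrix (Fin n) (Fin n) ℝ) (x : Fin n → ℝ) : Fin n → ℝ :=
  fun i => max (x i) 0 - M.mulVec (fun j => max (-x j) 0) i

/-- `z` solves the LCP `(M, q)`: with `w = Mz + q`, one has `z ≥ 0`, `w ≥ 0`, `wᵀz = 0`. -/
def isLCPsol {ι : Type*} [Fintype ι] (M : Matrix ι ι ℝ) (q z : ι → ℝ) : Prop :=
  (∀ i, 0 ≤ z i) ∧ (∀ i, 0 ≤ (M.mulVec z + q) i) ∧ (∀ i, (M.mulVec z + q) i * z i = 0)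

/-- The field of sets generated by the orthants (being finitely generated,
it coincides with the generated σ-algebra). -/
def orthField (n : ℕ) : MeasurableSpace (Fin n → ℝ) :=
  MeasurableSpace.generateFrom {S | ∃ α : Finset (Fin n), S = orthant α}

/-- `ψ` induces a Boolean automorphism `P ↦ ψ⁻¹(P)` of the field generated by the orthants. -/
def inducesBoolAuto {n : ℕ} (ψ : (Fin n → ℝ) ≃ₜ (Fin n → ℝ)) : Prop :=
  ∀ P : Set (Fin n → ℝ),
    @MeasurableSet _ (orthField n) P ↔ @MeasurableSet _ (orthField n) (⇑ψ ⁻¹' P)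

/-- LCP equivalence: `f_M = φ ∘ f_N ∘ ψ` for homeomorphisms `φ, ψ`, with `ψ`
inducing a Boolean automorphism on the field generated by the orthants. -/
def LCPequiv {n : ℕ} (M N : Matrix (Fin n) (Fin n) ℝ) : Prop :=
  ∃ (φ ψ : (Fin n → ℝ) ≃ₜ (Fin n → ℝ)),
    inducesBoolAuto ψ ∧ fpl M = ⇑φ ∘ fpl N ∘ ⇑ψ


/-! ### Order isomorphisms of the line with bounded displacement -/

/-- Tent-shaped move: an order isomorphism of `ℝ`, the identity off `(p, q)`, sending `a` to `b`. -/
theorem exists_move (p q a b : ℝ) (hpa : p < a) (haq : a < q) (hpb : p < b) (hbq : b < q) :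
    ∃ g : ℝ ≃o ℝ, (∃ C, ∀ x, |g x - x| ≤ C) ∧ g a = b ∧ (∀ x, x ≤ p → g x = x) ∧
      (∀ x, q ≤ x → g x = x) := by
  have h1 : 0 < a - p := by linarith
  have h2 : 0 < q - a := by linarith
  set T : ℝ → ℝ := fun x => max 0 (min ((x - p) / (a - p)) ((q - x) / (q - a))) with hT
  have hTc : Continuous T := by
    simp only [hT]; fun_prop
  have hT0 : ∀ x, 0 ≤ T x := fun x => le_max_left _ _
  have hT1 : ∀ x, T x ≤ 1 := by
    intro x
    refine max_le zero_le_one ?_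
    rcases le_total x a with h | h
    · exact (min_le_left _ _).trans ((div_le_one h1).2 (by linarith))
    · exact (min_le_right _ _).trans ((div_le_one h2).2 (by linarith))
  have hTa : T a = 1 := by
    simp only [hT]
    rw [div_self h1.ne', div_self h2.ne']; simp
  have hTp : ∀ x, x ≤ p → T x = 0 := by
    intro x hx
    refine max_eq_left ((min_le_left _ _).trans ?_)
    exact div_nonpos_of_nonpos_of_nonneg (by linarith) h1.le
  have hTq : ∀ x, q ≤ x → T x = 0 := by
    intro x hx
    refine max_eq_left ((min_le_right _ _).trans ?_)
    exact div_nonpos_of_nonpos_of_nonneg (by linarith) h2.le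
  have hup : ∀ x y, x < y → T y - T x ≤ (y - x) / (a - p) := by
    intro x y hxy
    have hpos : 0 < (y - x) / (a - p) := div_pos (by linarith) h1
    have e1 : (y - p) / (a - p) = (x - p) / (a - p) + (y - x) / (a - p) := by ring
    have e2 : (q - y) / (q - a) ≤ (q - x) / (q - a) := by gcongr
    simp only [hT]
    rw [e1]
    grind
  have hlo : ∀ x y, x < y → T x - T y ≤ (y - x) / (q - a) := by
    intro x y hxy
    have hpos : 0 < (y - x) / (q - a) := div_pos (by linarith) h2
    have e1 : (q - x) / (q - a) = (q - y) / (q - a) + (y - x) / (q - a) := by ring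
    have e2 : (x - p) / (a - p) ≤ (y - p) / (a - p) := by gcongr
    simp only [hT]
    rw [e1]
    grind
  set G : ℝ → ℝ := fun x => x + (b - a) * T x with hG
  have hmono : StrictMono G := by
    intro x y hxy
    simp only [hG]
    have hd : 0 < y - x := by linarith
    rcases le_total a b with h | h
    · have := hlo x y hxy
      have h3 : (b - a) * (T x - T y) ≤ (b - a) * ((y - x) / (q - a)) :=
        mul_le_mul_of_nonneg_left this (by linarith)
      have h4 : (b - a) * ((y - x) / (q - a)) < y - x := by
        rw [← mul_div_assoc, div_lt_iff₀ h2]; nlinarith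
      linarith
    · have := hup x y hxy
      have h3 : (a - b) * (T y - T x) ≤ (a - b) * ((y - x) / (a - p)) :=
        mul_le_mul_of_nonneg_left this (by linarith)
      have h4 : (a - b) * ((y - x) / (a - p)) < y - x := by
        rw [← mul_div_assoc, div_lt_iff₀ h1]; nlinarith
      linarith
  have hbd : ∀ x, |G x - x| ≤ |b - a| := by
    intro x
    have : G x - x = (b - a) * T x := by simp only [hG]; ring
    rw [this, abs_mul, abs_of_nonneg (hT0 x)]
    exact mul_le_of_le_one_right (abs_nonneg _) (hT1 x)
  have hsurj : Function.Surjective G := by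
    have hGc : Continuous G := by simp only [hG]; fun_prop
    refine hGc.surjective ?_ ?_
    · refine Filter.tendsto_atTop_mono (f := fun x => x + -|b - a|) ?_
        (Filter.tendsto_atTop_add_const_right _ _ Filter.tendsto_id)
      intro x
      have := (abs_le.1 (hbd x)).1
      show x + -|b - a| ≤ G x
      linarith
    · refine Filter.tendsto_atBot_mono (g := G) (f := fun x => x + |b - a|) ?_
        (Filter.tendsto_atBot_add_const_right _ _ Filter.tendsto_id)
      intro x
      have := (abs_le.1 (hbd x)).2
      show G x ≤ x + |b - a|
      linarith
  refine ⟨hmono.orderIsoOfSurjective G hsurj, ⟨|b - a|, hbd⟩, ?_, ?_, ?_⟩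
  · show G a = b
    simp only [hG, hTa]; ring
  · intro x hx
    show G x = x
    simp only [hG, hTp x hx]; ring
  · intro x hx
    show G x = x
    simp only [hG, hTq x hx]; ring

theorem bdd_trans (g h : ℝ ≃o ℝ) (hg : ∃ C, ∀ x, |g x - x| ≤ C) (hh : ∃ C, ∀ x, |h x - x| ≤ C) :
    ∃ C, ∀ x, |(g.trans h) x - x| ≤ C := by
  obtain ⟨C, hC⟩ := hg
  obtain ⟨E, hE⟩ := hh
  refine ⟨E + C, fun x => ?_⟩
  have : (g.trans h) x - x = (h (g x) - g x) + (g x - x) := by simp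
  rw [this]
  exact (abs_add_le _ _).trans (add_le_add (hE _) (hC _))

/-- The order isomorphism moving the slopes, in the case `a < b`. -/
theorem exists_slopes_lt (a b a' b' : ℝ) (hab : a < b) (hab' : a' < b') (ha : 0 < a * a')
    (hb : 0 < b * b') :
    ∃ g : ℝ ≃o ℝ, (∃ C, ∀ x, |g x - x| ≤ C) ∧ g 0 = 0 ∧ g a = a' ∧ g b = b' := by
  rcases pos_and_pos_or_neg_and_neg_of_mul_pos ha with ⟨h1, h2⟩ | ⟨h1, h2⟩
  · -- `0 < a < b`
    set B := max b b'
    have hB1 : b ≤ B := le_max_left _ _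
    have hB2 : b' ≤ B := le_max_right _ _
    obtain ⟨g₁, k₁, e₁, l₁, r₁⟩ := exists_move a (B + 1) b B hab (by linarith) (by linarith)
      (by linarith)
    obtain ⟨g₂, k₂, e₂, l₂, r₂⟩ := exists_move 0 B a a' h1 (by linarith) h2 (by linarith)
    obtain ⟨g₃, k₃, e₃, l₃, r₃⟩ := exists_move a' (B + 1) B b' (by linarith) (by linarith) hab'
      (by linarith)
    refine ⟨(g₁.trans g₂).trans g₃, bdd_trans _ _ (bdd_trans _ _ k₁ k₂) k₃, ?_, ?_, ?_⟩
    · simp only [OrderIso.trans_apply]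
      rw [l₁ 0 h1.le, l₂ 0 le_rfl, l₃ 0 h2.le]
    · simp only [OrderIso.trans_apply]
      rw [l₁ a le_rfl, e₂, l₃ a' le_rfl]
    · simp only [OrderIso.trans_apply]
      rw [e₁, r₂ B le_rfl, e₃]
  rcases pos_and_pos_or_neg_and_neg_of_mul_pos hb with ⟨h3, h4⟩ | ⟨h3, h4⟩
  · -- `a < 0 < b`
    obtain ⟨g₁, k₁, e₁, l₁, r₁⟩ := exists_move (a + a') 0 a a' (by linarith) h1 (by linarith) h2
    obtain ⟨g₂, k₂, e₂, l₂, r₂⟩ := exists_move 0 (b + b') b b' h3 (by linarith) h4 (by linarith)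
    refine ⟨g₁.trans g₂, bdd_trans _ _ k₁ k₂, ?_, ?_, ?_⟩
    · simp only [OrderIso.trans_apply]
      rw [r₁ 0 le_rfl, l₂ 0 le_rfl]
    · simp only [OrderIso.trans_apply]
      rw [e₁, l₂ a' h2.le]
    · simp only [OrderIso.trans_apply]
      rw [r₁ b h3.le, e₂]
  · -- `a < b < 0`
    set A := min a a'
    have hA1 : A ≤ a := min_le_left _ _
    have hA2 : A ≤ a' := min_le_right _ _
    obtain ⟨g₁, k₁, e₁, l₁, r₁⟩ := exists_move (A - 1) b a A (by linarith) hab (by linarith)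
      (by linarith)
    obtain ⟨g₂, k₂, e₂, l₂, r₂⟩ := exists_move A 0 b b' (by linarith) h3 (by linarith) h4
    obtain ⟨g₃, k₃, e₃, l₃, r₃⟩ := exists_move (A - 1) b' A a' (by linarith) (by linarith)
      (by linarith) hab'
    refine ⟨(g₁.trans g₂).trans g₃, bdd_trans _ _ (bdd_trans _ _ k₁ k₂) k₃, ?_, ?_, ?_⟩
    · simp only [OrderIso.trans_apply]
      rw [r₁ 0 h3.le, r₂ 0 le_rfl, r₃ 0 h4.le]
    · simp only [OrderIso.trans_apply]
      rw [e₁, l₂ A le_rfl, e₃]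
    · simp only [OrderIso.trans_apply]
      rw [r₁ b le_rfl, e₂, r₃ b' le_rfl]

theorem exists_slopes (a b a' b' : ℝ) (hab : 0 < (b - a) * (b' - a')) (ha : 0 < a * a')
    (hb : 0 < b * b') :
    ∃ g : ℝ ≃o ℝ, (∃ C, ∀ x, |g x - x| ≤ C) ∧ g 0 = 0 ∧ g a = a' ∧ g b = b' := by
  rcases pos_and_pos_or_neg_and_neg_of_mul_pos hab with ⟨h1, h2⟩ | ⟨h1, h2⟩
  · exact exists_slopes_lt a b a' b' (by linarith) (by linarith) ha hb
  · obtain ⟨g, k, e0, e1, e2⟩ :=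
      exists_slopes_lt b a b' a' (by linarith) (by linarith) hb ha
    exact ⟨g, k, e0, e2, e1⟩

/-! ### The homeomorphism of the plane acting on slopes by `g` -/

noncomputable def slopeMap (g : ℝ → ℝ) (y : Fin 2 → ℝ) : Fin 2 → ℝ :=
  ![y 0, y 1 + y 0 * (g (y 1 / y 0) - y 1 / y 0)]

theorem slopeMap_zero (g : ℝ → ℝ) (y : Fin 2 → ℝ) (h : y 0 = 0) : slopeMap g y = y := by
  ext i; fin_cases i <;> simp [slopeMap, h]

theorem slopeMap_ne (g : ℝ → ℝ) (y : Fin 2 → ℝ) (h : y 0 ≠ 0) :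
    slopeMap g y = ![y 0, y 0 * g (y 1 / y 0)] := by
  ext i; fin_cases i
  · simp [slopeMap]
  · simp [slopeMap]; field_simp; ring

theorem slopeMap_continuous (g : ℝ → ℝ) (hg : Continuous g) (hb : ∃ C, ∀ x, |g x - x| ≤ C) :
    Continuous (slopeMap g) := by
  obtain ⟨C, hC⟩ := hb
  have key : Continuous fun y : Fin 2 → ℝ => y 0 * (g (y 1 / y 0) - y 1 / y 0) := by
    rw [continuous_iff_continuousAt]
    intro y
    by_cases h : y 0 = 0
    · have hlim : Filter.Tendsto (fun z : Fin 2 → ℝ => C * |z 0|) (nhds y) (nhds 0) := by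
        have : Continuous fun z : Fin 2 → ℝ => C * |z 0| := by fun_prop
        have := this.tendsto y
        simpa [h] using this
      have e : y 0 * (g (y 1 / y 0) - y 1 / y 0) = 0 := by rw [h, zero_mul]
      unfold ContinuousAt
      beta_reduce
      rw [e]
      refine squeeze_zero_norm (fun z => ?_) hlim
      rw [Real.norm_eq_abs, abs_mul, mul_comm]
      exact mul_le_mul_of_nonneg_right (hC _) (abs_nonneg _)
    · have h1 : ContinuousAt (fun z : Fin 2 → ℝ => z 1 / z 0) y :=
        ContinuousAt.div (continuous_apply 1).continuousAt (continuous_apply 0).continuousAt h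
      have h2 : ContinuousAt (fun z : Fin 2 → ℝ => g (z 1 / z 0)) y :=
        ContinuousAt.comp (f := fun z : Fin 2 → ℝ => z 1 / z 0) hg.continuousAt h1
      exact ContinuousAt.mul (continuous_apply 0).continuousAt (h2.sub h1)
  refine continuous_pi fun i => ?_
  fin_cases i
  · simpa [slopeMap] using continuous_apply (0 : Fin 2)
  · simp only [slopeMap, Fin.mk_one, Matrix.cons_val_one, Matrix.cons_val_fin_one]
    exact (continuous_apply _).add key

theorem slopeMap_inv (g k : ℝ → ℝ) (h : ∀ x, k (g x) = x) (y : Fin 2 → ℝ) :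
    slopeMap k (slopeMap g y) = y := by
  by_cases h0 : y 0 = 0
  · rw [slopeMap_zero g y h0, slopeMap_zero k y h0]
  · rw [slopeMap_ne g y h0, slopeMap_ne k _ (by simpa using h0)]
    ext i; fin_cases i
    · simp
    · simp [h0, h]; field_simp

noncomputable def slopeHomeo (g : ℝ ≃o ℝ) (hb : ∃ C, ∀ x, |g x - x| ≤ C) :
    (Fin 2 → ℝ) ≃ₜ (Fin 2 → ℝ) where
  toFun := slopeMap g
  invFun := slopeMap g.symm
  left_inv := slopeMap_inv g g.symm (fun x => by simp)
  right_inv := slopeMap_inv g.symm g (fun x => by simp)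
  continuous_toFun := slopeMap_continuous g g.continuous hb
  continuous_invFun := by
    refine slopeMap_continuous g.symm g.symm.continuous ?_
    obtain ⟨C, hC⟩ := hb
    refine ⟨C, fun x => ?_⟩
    have := hC (g.symm x)
    rw [abs_sub_comm]
    simpa using this

/-! ### Determinants, signs and columns -/

/-- The planar determinant. -/
def pdet (u v : Fin 2 → ℝ) : ℝ := u 0 * v 1 - u 1 * v 0

/-- The `j`-th column of a complementary matrix. -/
def pcol (M : Matrix (Fin 2) (Fin 2) ℝ) (j : Fin 2) (s : Bool) : Fin 2 → ℝ :=
  fun i => if s then M i j else if i = j then 1 else 0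

/-- Half-line of reals. -/
def half (s : Bool) (t : ℝ) : Prop := if s then t ≤ 0 else 0 ≤ t

theorem sign_eq_of_mul_pos {a b : ℝ} (h : 0 < a * b) : SignType.sign a = SignType.sign b := by
  rcases pos_and_pos_or_neg_and_neg_of_mul_pos h with ⟨h1, h2⟩ | ⟨h1, h2⟩
  · rw [sign_pos h1, sign_pos h2]
  · rw [sign_neg h1, sign_neg h2]

theorem half_of_sign {a b : ℝ} (h : SignType.sign a = SignType.sign b) (s : Bool) :
    half s a → half s b := by
  cases s
  · simp only [half]
    intro ha
    rw [← sign_nonneg_iff] at *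
    simp_all
  · simp only [half]
    intro ha
    simp only [if_true] at *
    rw [← sign_nonpos_iff] at *
    simp_all

theorem exists_half (t : ℝ) : ∃ s, half s t := by
  rcases le_total t 0 with h | h
  · exact ⟨true, by simpa [half] using h⟩
  · exact ⟨false, by simpa [half] using h⟩

theorem fpl_eq (M : Matrix (Fin 2) (Fin 2) ℝ) (x : Fin 2 → ℝ) (s t : Bool)
    (hs : half s (x 0)) (ht : half t (x 1)) :
    fpl M x = fun i => x 0 * pcol M 0 s i + x 1 * pcol M 1 t i := by
  cases s <;> cases t <;> simp only [half, if_true, Bool.false_eq_true, if_false] at hs ht <;>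
    ext i <;> fin_cases i <;>
    simp [fpl, pcol, Matrix.mulVec, dotProduct, Fin.sum_univ_two, hs, ht] <;> ring

/-- The compatibility relation between `φ`, `M` and `N`. -/
def Compat (φ : (Fin 2 → ℝ) ≃ₜ (Fin 2 → ℝ)) (M N : Matrix (Fin 2) (Fin 2) ℝ) : Prop :=
  (∀ j s y, SignType.sign (pdet (φ y) (pcol M j s)) = SignType.sign (pdet y (pcol N j s))) ∧
  (∀ s t, 0 < pdet (pcol M 0 s) (pcol M 1 t) * pdet (pcol N 0 s) (pcol N 1 t))

theorem Compat.symm {φ : (Fin 2 → ℝ) ≃ₜ (Fin 2 → ℝ)} {M N : Matrix (Fin 2) (Fin 2) ℝ}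
    (h : Compat φ M N) : Compat φ.symm N M := by
  refine ⟨fun j s y => ?_, fun s t => by rw [mul_comm]; exact h.2 s t⟩
  rw [← h.1 j s (φ.symm y), φ.apply_symm_apply]

/-- Coordinates with respect to a basis (Cramer). -/
theorem cramer2 (u v : Fin 2 → ℝ) (hD : pdet u v ≠ 0) (z : Fin 2 → ℝ) (y : Fin 2 → ℝ) :
    ((fun i => z 0 * u i + z 1 * v i) = y) ↔
      z = ![pdet y v / pdet u v, - pdet y u / pdet u v] := by
  constructor
  · rintro rfl
    ext i; fin_cases i
    · simp only [Fin.zero_eta, Matrix.cons_val_zero]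
      rw [eq_div_iff hD]; simp only [pdet]; ring
    · simp only [Fin.mk_one, Matrix.cons_val_one, Matrix.cons_val_fin_one]
      rw [eq_div_iff hD]; simp only [pdet]; ring
  · rintro rfl
    ext i
    simp only [Matrix.cons_val_zero, Matrix.cons_val_one, Matrix.cons_val_fin_one]
    rw [div_mul_eq_mul_div, div_mul_eq_mul_div, ← add_div, div_eq_iff hD]
    fin_cases i <;> simp only [pdet, Fin.zero_eta, Fin.mk_one] <;> ring

theorem Compat.exists_lift {φ : (Fin 2 → ℝ) ≃ₜ (Fin 2 → ℝ)} {M N : Matrix (Fin 2) (Fin 2) ℝ}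
    (h : Compat φ M N) (x : Fin 2 → ℝ) :
    ∃ z, fpl N z = φ.symm (fpl M x) ∧ ∀ j, SignType.sign (z j) = SignType.sign (x j) := by
  obtain ⟨s, hs⟩ := exists_half (x 0)
  obtain ⟨t, ht⟩ := exists_half (x 1)
  set y := φ.symm (fpl M x) with hy
  have hφ : φ y = fpl M x := φ.apply_symm_apply _
  have hf := fpl_eq M x s t hs ht
  have hdet := h.2 s t
  set u := pcol M 0 s with hu
  set v := pcol M 1 t with hv
  set u' := pcol N 0 s with hu'
  set v' := pcol N 1 t with hv'
  have hD' : pdet u' v' ≠ 0 := right_ne_zero_of_mul hdet.ne'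
  have hD : pdet u v ≠ 0 := left_ne_zero_of_mul hdet.ne'
  have hsD := sign_eq_of_mul_pos hdet
  have hss : SignType.sign (pdet u' v') * SignType.sign (pdet u' v') = 1 := by
    rw [← sign_mul]; exact sign_pos (mul_self_pos.2 hD')
  set z : Fin 2 → ℝ := ![pdet y v' / pdet u' v', - pdet y u' / pdet u' v'] with hz
  have z0 : z 0 * pdet u' v' = pdet y v' := by simp [hz, hD']
  have z1 : z 1 * pdet u' v' = - pdet y u' := by simp [hz, hD']
  have x0 : pdet (φ y) v = x 0 * pdet u v := by rw [hφ, hf]; simp only [pdet]; ring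
  have x1 : pdet (φ y) u = - (x 1 * pdet u v) := by rw [hφ, hf]; simp only [pdet]; ring
  have s0 : SignType.sign (z 0) = SignType.sign (x 0) := by
    have e := congrArg SignType.sign z0
    rw [sign_mul, ← h.1 1 t y, x0, sign_mul, hsD] at e
    have := congrArg (· * SignType.sign (pdet u' v')) e
    simpa only [mul_assoc, hss, mul_one] using this
  have s1 : SignType.sign (z 1) = SignType.sign (x 1) := by
    have e := congrArg SignType.sign z1
    rw [sign_mul, Left.sign_neg, ← h.1 0 s y, x1, Left.sign_neg, neg_neg, sign_mul, hsD] at e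
    have := congrArg (· * SignType.sign (pdet u' v')) e
    simpa only [mul_assoc, hss, mul_one] using this
  refine ⟨z, ?_, ?_⟩
  · rw [fpl_eq N z s t (half_of_sign s0.symm s hs) (half_of_sign s1.symm t ht)]
    exact (cramer2 u' v' hD' z y).2 hz
  · intro j; fin_cases j
    · exact s0
    · exact s1

/-- Explicit form on a closed quadrant. -/
theorem Compat.lift_eq {φ : (Fin 2 → ℝ) ≃ₜ (Fin 2 → ℝ)} {M N : Matrix (Fin 2) (Fin 2) ℝ}
    (h : Compat φ M N) (s t : Bool) (z y : Fin 2 → ℝ) (hs : half s (z 0)) (ht : half t (z 1))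
    (hz : fpl N z = y) :
    z = ![pdet y (pcol N 1 t) / pdet (pcol N 0 s) (pcol N 1 t),
      - pdet y (pcol N 0 s) / pdet (pcol N 0 s) (pcol N 1 t)] := by
  have hD' := right_ne_zero_of_mul (h.2 s t).ne'
  rw [fpl_eq N z s t hs ht] at hz
  exact (cramer2 _ _ hD' z y).1 hz

theorem fpl_continuous (M : Matrix (Fin 2) (Fin 2) ℝ) : Continuous (fpl M) := by
  unfold fpl Matrix.mulVec dotProduct
  fun_prop

theorem half_closed (s : Bool) (j : Fin 2) : IsClosed {x : Fin 2 → ℝ | half s (x j)} := by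
  cases s
  · simpa [half] using isClosed_le continuous_const (continuous_apply j)
  · simpa [half] using isClosed_le (continuous_apply j) continuous_const

theorem Compat.lift_continuous {φ : (Fin 2 → ℝ) ≃ₜ (Fin 2 → ℝ)} {M N : Matrix (Fin 2) (Fin 2) ℝ}
    (h : Compat φ M N) (ψ : (Fin 2 → ℝ) → (Fin 2 → ℝ))
    (h1 : ∀ x, fpl N (ψ x) = φ.symm (fpl M x))
    (h2 : ∀ x j, SignType.sign (ψ x j) = SignType.sign (x j)) : Continuous ψ := by
  refine LocallyFinite.continuous
    (f := fun p : Bool × Bool => {x : Fin 2 → ℝ | half p.1 (x 0)} ∩ {x | half p.2 (x 1)})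
    (locallyFinite_of_finite _) ?_ ?_ ?_
  · rw [Set.eq_univ_iff_forall]
    intro x
    obtain ⟨s, hs⟩ := exists_half (x 0)
    obtain ⟨t, ht⟩ := exists_half (x 1)
    exact Set.mem_iUnion.2 ⟨(s, t), hs, ht⟩
  · rintro ⟨s, t⟩
    exact (half_closed s 0).inter (half_closed t 1)
  · rintro ⟨s, t⟩
    have hc : Continuous fun x => φ.symm (fpl M x) := φ.symm.continuous.comp (fpl_continuous M)
    have hp : ∀ v, Continuous fun x => pdet (φ.symm (fpl M x)) v := by
      intro v
      have hc0 : Continuous fun x => φ.symm (fpl M x) 0 := (continuous_apply 0).comp hc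
      have hc1 : Continuous fun x => φ.symm (fpl M x) 1 := (continuous_apply 1).comp hc
      exact (hc0.mul continuous_const).sub (hc1.mul continuous_const)
    have : Continuous fun x =>
        (![pdet (φ.symm (fpl M x)) (pcol N 1 t) / pdet (pcol N 0 s) (pcol N 1 t),
          - pdet (φ.symm (fpl M x)) (pcol N 0 s) / pdet (pcol N 0 s) (pcol N 1 t)]
            : Fin 2 → ℝ) := by
      refine continuous_pi fun i => ?_
      fin_cases i
      · exact (hp _).div_const _
      · exact (hp _).neg.div_const _
    refine this.continuousOn.congr ?_
    rintro x ⟨hs, ht⟩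
    exact h.lift_eq s t (ψ x) _ (half_of_sign (h2 x 0).symm s hs)
      (half_of_sign (h2 x 1).symm t ht) (h1 x)

theorem boolAuto_of_sign (ψ : (Fin 2 → ℝ) ≃ₜ (Fin 2 → ℝ))
    (h : ∀ x j, SignType.sign (ψ x j) = SignType.sign (x j)) : inducesBoolAuto ψ := by
  have key : ∀ k : (Fin 2 → ℝ) → (Fin 2 → ℝ),
      (∀ x j, SignType.sign (k x j) = SignType.sign (x j)) →
      ∀ P : Set (Fin 2 → ℝ), @MeasurableSet _ (orthField 2) P →
        @MeasurableSet _ (orthField 2) (k ⁻¹' P) := by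
    intro k hk P hP
    have hm : @Measurable _ _ (orthField 2) (orthField 2) k := by
      refine @measurable_generateFrom _ _ (orthField 2) _ _ ?_
      rintro S ⟨α, rfl⟩
      refine MeasurableSpace.measurableSet_generateFrom ⟨α, ?_⟩
      ext x
      simp only [Set.mem_preimage, orthant, Set.mem_setOf_eq]
      refine forall_congr' fun j => ?_
      have := hk x j
      split_ifs
      · rw [← sign_nonpos_iff, this, sign_nonpos_iff]
      · rw [← sign_nonneg_iff, this, sign_nonneg_iff]
    exact hm hP
  intro P
  refine ⟨key ψ h P, fun hP => ?_⟩
  have h' : ∀ x j, SignType.sign (ψ.symm x j) = SignType.sign (x j) := by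
    intro x j
    rw [← h (ψ.symm x) j, ψ.apply_symm_apply]
  have := key ψ.symm h' _ hP
  rwa [← Set.preimage_comp, ψ.self_comp_symm, Set.preimage_id] at this

theorem Compat.unique {φ : (Fin 2 → ℝ) ≃ₜ (Fin 2 → ℝ)} {M N : Matrix (Fin 2) (Fin 2) ℝ}
    (h : Compat φ M N) (z w : Fin 2 → ℝ) (hf : fpl N z = fpl N w)
    (hs : ∀ j, SignType.sign (z j) = SignType.sign (w j)) : z = w := by
  obtain ⟨s, hs0⟩ := exists_half (z 0)
  obtain ⟨t, ht0⟩ := exists_half (z 1)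
  rw [h.lift_eq s t z _ hs0 ht0 hf,
    ← h.lift_eq s t w _ (half_of_sign (hs 0) s hs0) (half_of_sign (hs 1) t ht0) rfl]

theorem Compat.equiv {φ : (Fin 2 → ℝ) ≃ₜ (Fin 2 → ℝ)} {M N : Matrix (Fin 2) (Fin 2) ℝ}
    (h : Compat φ M N) : LCPequiv M N := by
  choose ψ h1 h2 using h.exists_lift
  choose χ k1 k2 using h.symm.exists_lift
  have hφ : φ.symm.symm = φ := rfl
  rw [hφ] at k1
  let Ψ : (Fin 2 → ℝ) ≃ₜ (Fin 2 → ℝ) :=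
    { toFun := ψ
      invFun := χ
      left_inv := fun x => h.symm.unique _ _ (by rw [k1, h1, φ.apply_symm_apply])
        (fun j => by rw [k2, h2])
      right_inv := fun x => h.unique _ _ (by rw [h1, k1, φ.symm_apply_apply])
        (fun j => by rw [h2, k2])
      continuous_toFun := h.lift_continuous ψ h1 h2
      continuous_invFun := h.symm.lift_continuous χ k1 k2 }
  refine ⟨φ, Ψ, boolAuto_of_sign Ψ h2, ?_⟩
  funext x
  show fpl M x = φ (fpl N (ψ x))
  rw [h1, φ.apply_symm_apply]

theorem slope_sign (g : ℝ ≃o ℝ) (y : Fin 2 → ℝ) (a b c d : ℝ) (hac : 0 < a * c)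
    (hg : g (d / c) = b / a) :
    SignType.sign (slopeMap g y 0 * b - slopeMap g y 1 * a) =
      SignType.sign (y 0 * d - y 1 * c) := by
  have ha : a ≠ 0 := left_ne_zero_of_mul hac.ne'
  have hc : c ≠ 0 := right_ne_zero_of_mul hac.ne'
  have hs := sign_eq_of_mul_pos hac
  by_cases h0 : y 0 = 0
  · rw [slopeMap_zero g y h0, h0, zero_mul, zero_mul, zero_sub, zero_sub, Left.sign_neg,
      Left.sign_neg, sign_mul, sign_mul, hs]
  · rw [slopeMap_ne g y h0]
    simp only [Matrix.cons_val_zero, Matrix.cons_val_one, Matrix.cons_val_fin_one]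
    have e1 : y 0 * b - y 0 * g (y 1 / y 0) * a = y 0 * a * (b / a - g (y 1 / y 0)) := by
      field_simp
    have e2 : y 0 * d - y 1 * c = y 0 * c * (d / c - y 1 / y 0) := by
      field_simp
    rw [e1, e2, ← hg]
    simp only [sign_mul, hs]
    congr 1
    rcases lt_trichotomy (d / c) (y 1 / y 0) with hl | hl | hl
    · rw [sign_neg (sub_neg.2 hl), sign_neg (sub_neg.2 (g.strictMono hl))]
    · rw [hl]; simp
    · rw [sign_pos (sub_pos.2 hl), sign_pos (sub_pos.2 (g.strictMono hl))]

theorem slope_sign_one (g : ℝ ≃o ℝ) (hg : g 0 = 0) (y : Fin 2 → ℝ) :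
    SignType.sign (slopeMap g y 1) = SignType.sign (y 1) := by
  have := slope_sign g y 1 0 1 0 (by norm_num) (by simpa using hg)
  simpa [Left.sign_neg] using this

theorem stmt_14 (M N : Matrix (Fin 2) (Fin 2) ℝ)
    (h12 : 0 < M 0 1 * N 0 1) (h21 : 0 < M 1 0 * N 1 0)
    (h11 : 0 < M 0 0 * N 0 0) (h22 : 0 < M 1 1 * N 1 1)
    (hdet : 0 < M.det * N.det) : LCPequiv M N := by
  rw [Matrix.det_fin_two, Matrix.det_fin_two] at hdet
  have m00 : M 0 0 ≠ 0 := left_ne_zero_of_mul h11.ne'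
  have n00 : N 0 0 ≠ 0 := right_ne_zero_of_mul h11.ne'
  have m01 : M 0 1 ≠ 0 := left_ne_zero_of_mul h12.ne'
  have n01 : N 0 1 ≠ 0 := right_ne_zero_of_mul h12.ne'
  obtain ⟨g, hb, g0, ga, gb⟩ := exists_slopes (N 1 0 / N 0 0) (N 1 1 / N 0 1)
    (M 1 0 / M 0 0) (M 1 1 / M 0 1)
    (by
      have : (N 1 1 / N 0 1 - N 1 0 / N 0 0) * (M 1 1 / M 0 1 - M 1 0 / M 0 0) =
          ((M 0 0 * M 1 1 - M 0 1 * M 1 0) * (N 0 0 * N 1 1 - N 0 1 * N 1 0)) /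
            ((M 0 0 * N 0 0) * (M 0 1 * N 0 1)) := by field_simp
      rw [this]; positivity)
    (by
      have : N 1 0 / N 0 0 * (M 1 0 / M 0 0) = (M 1 0 * N 1 0) / (M 0 0 * N 0 0) := by field_simp
      rw [this]; positivity)
    (by
      have : N 1 1 / N 0 1 * (M 1 1 / M 0 1) = (M 1 1 * N 1 1) / (M 0 1 * N 0 1) := by field_simp
      rw [this]; positivity)
  have hC : Compat (slopeHomeo g hb) M N := by
    constructor
    · intro j s y
      have hφ : slopeHomeo g hb y = slopeMap g y := rfl
      rw [hφ]
      fin_cases j <;> cases s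
      · simpa [pdet, pcol, Left.sign_neg] using slope_sign_one g g0 y
      · simpa [pdet, pcol] using slope_sign g y _ _ _ _ h11 ga
      · simp [pdet, pcol, slopeMap]
      · simpa [pdet, pcol] using slope_sign g y _ _ _ _ h12 gb
    · intro s t
      cases s <;> cases t <;> simp [pdet, pcol]
      · exact h22
      · exact h11
      · linarith
  exact hC.equiv
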